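/- Let A and B be unital complex *-algebras, both prime, with A having a nontrivial projection, and α₁,...,α₆ ∈ ℂ with ∑αₖ ≠ 0. If Φ : A → B is a bijection preserving the sum of triple products α₁ab*c + α₂acb* + α₃b*ac + α₄cab* + α₅b*ca + α₆cb*a, and Φ(1_A) is a projection of B, then Φ is either a *-ring isomorphism or a *-ring anti-isomorphism: Φ is additive, Φ(a*) = Φ(a)* for all a, and either Φ(ab) = Φ(a)Φ(b) for all a,b ∈ A or Φ(ab) = Φ(b)Φ(a) for all a,b ∈ A. -/

import Mathlib

def starTripleSum {R : Type*} [NonUnitalRing R] [Module ℂ R] [StarRing R]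
    (α1 α2 α3 α4 α5 α6 : ℂ) (a b c : R) : R :=
  α1 • (a * star b * c) + α2 • (a * c * star b) + α3 • (star b * a * c) +
  α4 • (c * a * star b) + α5 • (star b * c * a) + α6 • (c * star b * a)

set_option linter.unusedSectionVars false
set_option linter.unusedSimpArgs false

/-- The weighted Jordan product. -/
def wj {R : Type*} [Ring R] [Algebra ℂ R] (l m : ℂ) (a c : R) : R :=
  l • (a * c) + m • (c * a)

theorem wj_add_left {R : Type*} [Ring R] [Algebra ℂ R] (l m : ℂ) (a b c : R) :
    wj l m (a + b) c = wj l m a c + wj l m b c := by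
  simp only [wj, add_mul, mul_add, smul_add]; abel

theorem wj_add_right {R : Type*} [Ring R] [Algebra ℂ R] (l m : ℂ) (a b c : R) :
    wj l m c (a + b) = wj l m c a + wj l m c b := by
  simp only [wj, add_mul, mul_add, smul_add]; abel

theorem wj_sub_left {R : Type*} [Ring R] [Algebra ℂ R] (l m : ℂ) (a b c : R) :
    wj l m (a - b) c = wj l m a c - wj l m b c := by
  simp only [wj, sub_mul, mul_sub, smul_sub]; abel

theorem wj_sub_right {R : Type*} [Ring R] [Algebra ℂ R] (l m : ℂ) (a b c : R) :
    wj l m c (a - b) = wj l m c a - wj l m c b := by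
  simp only [wj, sub_mul, mul_sub, smul_sub]; abel

/-- The map preserves the weighted Jordan product. -/
structure Good {A B : Type*} [Ring A] [Algebra ℂ A] [Ring B] [Algebra ℂ B]
    (l m : ℂ) (Φ : A → B) : Prop where
  hl : l ≠ 0
  hlm : l + m = 1
  bij : Function.Bijective Φ
  zero : Φ 0 = 0
  hJ : ∀ a c, Φ (wj l m a c) = wj l m (Φ a) (Φ c)
  prime : ∀ x y : A, (∀ t : A, x * t * y = 0) → x = 0 ∨ y = 0

/-- A nontrivial pair of complementary idempotents. -/
structure Pair {A : Type*} [Ring A] (e f : A) : Prop where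
  ee : e * e = e
  ff : f * f = f
  ef : e * f = 0
  fe : f * e = 0
  one : e + f = 1
  e0 : e ≠ 0
  f0 : f ≠ 0

theorem Pair.swap {A : Type*} [Ring A] {e f : A} (h : Pair e f) : Pair f e :=
  ⟨h.ff, h.ee, h.fe, h.ef, by rw [add_comm, h.one], h.f0, h.e0⟩

/-- Peirce components. -/
structure Pc {A : Type*} [Ring A] (l l' r r' x : A) : Prop where
  a : l * x = x
  b : l' * x = 0
  c : x * r = x
  d : x * r' = 0

section
variable {A B : Type*} [Ring A] [Algebra ℂ A] [Ring B] [Algebra ℂ B]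
  {l m : ℂ} {Φ : A → B} {e f : A}

theorem Pc.add {p p' q q' x y : A} (hx : Pc p p' q q' x) (hy : Pc p p' q q' y) :
    Pc p p' q q' (x + y) :=
  ⟨by rw [mul_add, hx.a, hy.a], by rw [mul_add, hx.b, hy.b, add_zero],
   by rw [add_mul, hx.c, hy.c], by rw [add_mul, hx.d, hy.d, add_zero]⟩

theorem Pc.smul {p p' q q' x : A} (k : ℂ) (hx : Pc p p' q q' x) :
    Pc p p' q q' (k • x) :=
  ⟨by rw [mul_smul_comm, hx.a], by rw [mul_smul_comm, hx.b, smul_zero],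
   by rw [smul_mul_assoc, hx.c], by rw [smul_mul_assoc, hx.d, smul_zero]⟩

theorem Pc.mul {p p' q q' r r' s s' x y : A} (hx : Pc p p' q q' x) (hy : Pc r r' s s' y) :
    Pc p p' s s' (x * y) :=
  ⟨by rw [← mul_assoc, hx.a], by rw [← mul_assoc, hx.b, zero_mul],
   by rw [mul_assoc, hy.c], by rw [mul_assoc, hy.d, mul_zero]⟩

/-- Product of mismatched components vanishes. -/
theorem Pc.mul0 {p p' q q' r s s' x y : A} (hx : Pc p p' q q' x) (hy : Pc q' r s s' y) :
    x * y = 0 := by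
  rw [← hy.a, ← mul_assoc, hx.d, zero_mul]

theorem Pair.p11 (h : Pair e f) (y : A) : Pc e f e f (e * y * e) := by
  constructor
  · simp [← mul_assoc, h.ee]
  · simp [← mul_assoc, h.fe]
  · simp [mul_assoc, h.ee]
  · simp [mul_assoc, h.ef]

theorem Pair.p12 (h : Pair e f) (y : A) : Pc e f f e (e * y * f) := by
  constructor
  · simp [← mul_assoc, h.ee]
  · simp [← mul_assoc, h.fe]
  · simp [mul_assoc, h.ff]
  · simp [mul_assoc, h.fe]

theorem Pair.dec (h : Pair e f) (y : A) :
    y = e * y * e + e * y * f + f * y * e + f * y * f := by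
  have : y = (e + f) * y * (e + f) := by rw [h.one]; simp
  conv_lhs => rw [this]
  noncomm_ring

theorem Pair.zero2 (h : Pair e f) {d : A} (h1 : d * e = 0) (h2 : d * f = 0) : d = 0 := by
  have : d = d * (e + f) := by rw [h.one, mul_one]
  rw [this, mul_add, h1, h2, add_zero]

theorem Good.K (g : Good l m Φ) {t a b : A} (h : Φ t = Φ a + Φ b) (c : A) :
    Φ (wj l m t c) = Φ (wj l m a c) + Φ (wj l m b c) := by
  rw [g.hJ, g.hJ, g.hJ, h, wj_add_left]

theorem Good.K' (g : Good l m Φ) {t a b : A} (h : Φ t = Φ a + Φ b) (c : A) :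
    Φ (wj l m c t) = Φ (wj l m c a) + Φ (wj l m c b) := by
  rw [g.hJ, g.hJ, g.hJ, h, wj_add_right]

theorem two_kill {x : A} (h : x + x = 0) : x = 0 := by
  have : (2 : ℂ) • x = 0 := by rw [two_smul, h]
  exact (smul_eq_zero_iff_right (two_ne_zero)).1 this

theorem smul_kill {k : ℂ} (hk : k ≠ 0) {x : A} (h : k • x = 0) : x = 0 :=
  (smul_eq_zero_iff_right hk).1 h

/-- Jordan multiplication by an idempotent kills `d`. -/
theorem Good.HF (g : Good l m Φ) (hf : f * f = f) {d : A}
    (h1 : wj l m d f = 0) (h2 : wj l m f d = 0) : d * f = 0 ∧ f * d = 0 := by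
  have h3 : d * f + f * d = 0 := by
    have : wj l m d f + wj l m f d = (l + m) • (d * f + f * d) := by
      simp only [wj, add_smul, smul_add]; abel
    rw [h1, h2, g.hlm, one_smul] at this
    rw [← this, add_zero]
  have h4 : f * d * f + f * d = 0 := by
    have := congrArg (fun z => f * z) h3
    simpa [mul_add, ← mul_assoc, hf] using this
  have h5 : f * d * f = 0 := by
    have := congrArg (fun z => z * f) h4
    simp only [add_mul, zero_mul] at this
    rw [mul_assoc (f * d), hf] at this
    exact two_kill this
  have h6 : f * d = 0 := by simpa [h5] using h4
  exact ⟨by simpa [h6] using h3, h6⟩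

/-- If `Φ t = Φ a + Φ b` and `b` is killed by `f`, then `t` agrees with `a + b` off the corner. -/
theorem Good.HF2 (g : Good l m Φ) (hf : f * f = f) {t a b : A} (h : Φ t = Φ a + Φ b)
    (h1 : b * f = 0) (h2 : f * b = 0) :
    (t - (a + b)) * f = 0 ∧ f * (t - (a + b)) = 0 := by
  have e1 : wj l m b f = 0 := by simp [wj, h1, h2]
  have e2 : wj l m f b = 0 := by simp [wj, h1, h2]
  have k1 := g.K h f
  have k2 := g.K' h f
  rw [e1, g.zero, add_zero] at k1
  rw [e2, g.zero, add_zero] at k2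
  apply g.HF hf
  · rw [wj_sub_left, wj_add_left, e1, g.bij.1 k1]; simp
  · rw [wj_sub_right, wj_add_right, e2, g.bij.1 k2]; simp

theorem Good.kc (g : Good l m Φ) {t a b c : A} (h : Φ t = Φ a + Φ b)
    (h1 : b * c = 0) (h2 : c * b = 0) :
    wj l m (t - (a + b)) c = 0 ∧ wj l m c (t - (a + b)) = 0 := by
  have e1 : wj l m b c = 0 := by simp [wj, h1, h2]
  have e2 : wj l m c b = 0 := by simp [wj, h1, h2]
  have k1 := g.K h c
  have k2 := g.K' h c
  rw [e1, g.zero, add_zero] at k1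
  rw [e2, g.zero, add_zero] at k2
  constructor
  · rw [wj_sub_left, wj_add_left, e1, g.bij.1 k1]; simp
  · rw [wj_sub_right, wj_add_right, e2, g.bij.1 k2]; simp

theorem Good.pr (g : Good l m Φ) {x : A} (hf : f ≠ 0) (h : ∀ y, x * y * f = 0) : x = 0 :=
  (g.prime x f h).resolve_right hf

theorem Good.pl (g : Good l m Φ) {x : A} (hf : f ≠ 0) (h : ∀ y, f * y * x = 0) : x = 0 :=
  (g.prime f x h).resolve_left hf

/-- `d` in the corner and `d c = 0` for all `c` in the (1,2) component. -/
theorem Good.fin (g : Good l m Φ) (h : Pair e f) {d : A} (h1 : d * f = 0)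
    (h3 : ∀ y, d * (e * y * f) = 0) : d = 0 := by
  refine h.zero2 (g.pr h.f0 (fun y => ?_)) h1
  have := h3 y
  simpa [mul_assoc] using this

/-- a11 + a12 -/
theorem Good.add1112 (g : Good l m Φ) (h : Pair e f) {a b : A} (ha : Pc e f e f a)
    (hb : Pc e f f e b) : Φ (a + b) = Φ a + Φ b := by
  obtain ⟨t, ht⟩ := g.bij.2 (Φ a + Φ b)
  obtain ⟨h1, h2⟩ := g.HF2 h.ff (ht.trans (add_comm _ _)) ha.d ha.b
  rw [add_comm b a] at h1 h2
  rw [← ht]; congr 1; symm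
  rw [← sub_eq_zero]
  refine g.fin h h1 (fun y => ?_)
  have k := (g.kc ht (hb.mul0 (h.p12 y)) ((h.p12 y).mul0 hb)).1
  have : e * y * f * (t - (a + b)) = 0 := by rw [mul_assoc, h2, mul_zero]
  rw [wj, this, smul_zero, add_zero] at k
  exact smul_kill g.hl k

/-- a11 + a21 -/
theorem Good.add1121 (g : Good l m Φ) (h : Pair e f) {a b : A} (ha : Pc e f e f a)
    (hb : Pc f e e f b) : Φ (a + b) = Φ a + Φ b := by
  obtain ⟨t, ht⟩ := g.bij.2 (Φ a + Φ b)
  obtain ⟨h1, h2⟩ := g.HF2 h.ff (ht.trans (add_comm _ _)) ha.d ha.b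
  rw [add_comm b a] at h1 h2
  rw [← ht]; congr 1; symm
  rw [← sub_eq_zero]
  have h3 : e * (t - (a + b)) = 0 := by
    refine g.pl h.f0 (fun y => ?_)
    have k := (g.kc ht (hb.mul0 (h.swap.p12 y)) ((h.swap.p12 y).mul0 hb)).2
    have : (t - (a + b)) * (f * y * e) = 0 := by rw [← mul_assoc, ← mul_assoc, h1]; simp
    rw [wj, this, smul_zero, add_zero] at k
    rw [← mul_assoc]
    exact smul_kill g.hl k
  have : (e + f) * (t - (a + b)) = 0 := by rw [add_mul, h2, h3, add_zero]
  rwa [h.one, one_mul] at this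

/-- a12 + a21 -/
theorem Good.add1221 (g : Good l m Φ) (h : Pair e f) {a b : A} (ha : Pc e f f e a)
    (hb : Pc f e e f b) : Φ (a + b) = Φ a + Φ b := by
  obtain ⟨t, ht⟩ := g.bij.2 (Φ a + Φ b)
  rw [← ht]; congr 1; symm
  rw [← sub_eq_zero]
  have k : wj l m t e = wj l m f t := by
    apply g.bij.1
    rw [g.K ht, g.K' ht]
    simp [wj, ha.a, ha.b, ha.c, ha.d, hb.a, hb.b, hb.c, hb.d]
  have k2 : wj l m (t - (a + b)) e = wj l m f (t - (a + b)) := by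
    rw [wj_sub_left, wj_sub_right, k]
    simp [wj, mul_add, add_mul, ha.a, ha.b, ha.c, ha.d, hb.a, hb.b, hb.c, hb.d]
  set d := t - (a + b) with hd
  have d11 : e * d * e = 0 := by
    have := congrArg (fun z => e * z * e) k2
    simp only [wj, mul_add, add_mul, mul_smul_comm, smul_mul_assoc] at this
    have i1 : e * (d * e) * e = e * d * e := by simp [mul_assoc, h.ee]
    have i2 : e * (e * d) * e = e * d * e := by simp [← mul_assoc, h.ee]
    have i3 : e * (f * d) * e = 0 := by simp [← mul_assoc, h.ef]
    have i4 : e * (d * f) * e = 0 := by simp [mul_assoc, h.fe]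
    rw [i1, i2, i3, i4, ← add_smul, g.hlm] at this
    simpa using this
  have d22 : f * d * f = 0 := by
    have := congrArg (fun z => f * z * f) k2
    simp only [wj, mul_add, add_mul, mul_smul_comm, smul_mul_assoc] at this
    have i1 : f * (d * e) * f = 0 := by simp [mul_assoc, h.ef]
    have i2 : f * (e * d) * f = 0 := by simp [← mul_assoc, h.fe]
    have i3 : f * (f * d) * f = f * d * f := by simp [← mul_assoc, h.ff]
    have i4 : f * (d * f) * f = f * d * f := by simp [mul_assoc, h.ff]
    rw [i1, i2, i3, i4, smul_zero, smul_zero, add_zero, ← add_smul, g.hlm] at this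
    simpa using this.symm
  have d21 : f * d * e = 0 := by
    refine g.pr h.f0 (fun y => ?_)
    have k := (g.kc (ht.trans (add_comm _ _)) (ha.mul0 (h.p12 y)) ((h.p12 y).mul0 ha)).1
    rw [add_comm b a, ← hd] at k
    have := congrArg (fun z => f * z) k
    simp only [wj, mul_add, mul_smul_comm, mul_zero] at this
    have i1 : f * (e * y * f * d) = 0 := by simp [← mul_assoc, h.fe]
    rw [i1, smul_zero, add_zero] at this
    have := smul_kill g.hl this
    simpa [mul_assoc] using this
  have d12 : e * d * f = 0 := by
    refine g.pr h.e0 (fun y => ?_)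
    have k := (g.kc ht (hb.mul0 (h.swap.p12 y)) ((h.swap.p12 y).mul0 hb)).1
    rw [← hd] at k
    have := congrArg (fun z => e * z) k
    simp only [wj, mul_add, mul_smul_comm, mul_zero] at this
    have i1 : e * (f * y * e * d) = 0 := by simp [← mul_assoc, h.ef]
    rw [i1, smul_zero, add_zero] at this
    have := smul_kill g.hl this
    simpa [mul_assoc] using this
  rw [h.dec d, d11, d12, d21, d22]; simp

/-- a11 + (a12 + a21) -/
theorem Good.add3 (g : Good l m Φ) (h : Pair e f) {a b c : A} (ha : Pc e f e f a)
    (hb : Pc e f f e b) (hc : Pc f e e f c) : Φ (a + (b + c)) = Φ a + Φ (b + c) := by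
  obtain ⟨t, ht⟩ := g.bij.2 (Φ a + Φ (b + c))
  obtain ⟨h1, h2⟩ := g.HF2 h.ff (ht.trans (add_comm _ _)) ha.d ha.b
  rw [add_comm (b + c) a] at h1 h2
  rw [← ht]; congr 1; symm
  rw [← sub_eq_zero]
  refine g.fin h h1 (fun y => ?_)
  have hy := h.p12 y
  have k := g.K (g.K ht (e * y * f)) f
  set z := e * y * f with hz
  have j1 : wj l m (wj l m a z) f = (l * l) • (a * z) := by
    have : z * a = 0 := hy.mul0 ha
    simp only [wj, this, smul_zero, add_zero, smul_mul_assoc, mul_smul_comm, (ha.mul hy).b,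
      (ha.mul hy).c, smul_smul]
  have j2 : wj l m (wj l m (b + c) z) f = l • (c * z) := by
    have i1 : b * z = 0 := hb.mul0 hy
    have i2 : z * b = 0 := hy.mul0 hb
    simp only [wj, add_mul, mul_add, i1, i2, smul_zero, zero_add, smul_mul_assoc, mul_smul_comm,
      (hc.mul hy).a, (hc.mul hy).c, (hy.mul hc).b, (hy.mul hc).d, smul_smul, add_zero]
    rw [← add_smul, ← add_mul, g.hlm, one_mul]
  have k2 : Φ (wj l m (wj l m a z) f + wj l m (wj l m (b + c) z) f) =
      Φ (wj l m (wj l m a z) f) + Φ (wj l m (wj l m (b + c) z) f) := by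
    rw [j1, j2, add_comm, add_comm (Φ _)]
    exact g.add1121 h.swap ((hc.mul hy).smul _) ((ha.mul hy).smul _)
  rw [← k2] at k
  have k3 := g.bij.1 k
  rw [← wj_add_left, ← wj_add_left, ← sub_eq_zero, ← wj_sub_left, ← wj_sub_left] at k3
  have i1 : z * (t - (a + (b + c))) = 0 := by rw [hz, mul_assoc, h2, mul_zero]
  have i2 : f * ((t - (a + (b + c))) * z) = 0 := by rw [← mul_assoc, h2, zero_mul]
  have i3 : (t - (a + (b + c))) * z * f = (t - (a + (b + c))) * z := by rw [mul_assoc, hy.c]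
  simp only [wj, i1, smul_zero, add_zero, smul_mul_assoc, mul_smul_comm, i2, i3, smul_smul] at k3
  exact smul_kill (mul_ne_zero g.hl g.hl) k3

theorem Good.add4 (g : Good l m Φ) (h : Pair e f) {a b c d : A} (ha : Pc e f e f a)
    (hb : Pc e f f e b) (hc : Pc f e e f c) (hd : Pc f e f e d) :
    Φ (a + b + c + d) = Φ a + Φ b + Φ c + Φ d := by
  have r1 := g.add3 h ha hb hc
  have r2 := g.add3 h.swap hd hc hb
  have r3 := g.add1221 h hb hc
  have r4 := g.add1221 h.swap hc hb
  obtain ⟨t, ht⟩ := g.bij.2 (Φ a + Φ b + Φ c + Φ d)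
  have t1 : Φ t = Φ (a + (b + c)) + Φ d := by rw [ht, r1, r3]; abel
  have t2 : Φ t = Φ (d + (c + b)) + Φ a := by rw [ht, r2, r4]; abel
  have x1 := (g.HF2 h.ee t1 hd.d hd.b).1
  have x2 := (g.HF2 h.ff t2 ha.d ha.b).1
  have s1 : a + (b + c) + d = a + b + c + d := by abel
  have s2 : d + (c + b) + a = a + b + c + d := by abel
  rw [s1] at x1
  rw [s2] at x2
  rw [← ht]; congr 1; symm
  rw [← sub_eq_zero]
  exact h.zero2 x1 x2

theorem Good.dec (g : Good l m Φ) (h : Pair e f) (y : A) :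
    Φ y = Φ (e * y * e) + Φ (e * y * f) + Φ (f * y * e) + Φ (f * y * f) := by
  rw [← g.add4 h (h.p11 y) (h.p12 y) (h.swap.p12 y) (h.swap.p11 y), ← h.dec y]

theorem Pair.pe (h : Pair e f) : Pc e f e f e := ⟨h.ee, h.fe, h.ee, h.ef⟩

theorem Good.add12 (g : Good l m Φ) (h : Pair e f) {a b : A} (ha : Pc e f f e a)
    (hb : Pc e f f e b) : Φ (a + b) = Φ a + Φ b := by
  have key : ∀ a b : A, Pc e f f e a → Pc e f f e b → Φ (l • (a + b)) = Φ (l • a) + Φ (l • b) := by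
    intro a b ha hb
    have ab : a * b = 0 := ha.mul0 hb
    have ba : b * a = 0 := hb.mul0 ha
    have q : ∀ x y : A, x = l • y → Φ x = Φ (l • y) := fun x y hxy => by rw [hxy]
    have i1 : wj l m (e + a) (f + b) = l • (a + b) := by
      simp [wj, mul_add, add_mul, ha.a, ha.b, ha.c, ha.d, hb.a, hb.b, hb.c, hb.d, h.ef, h.fe, ab, ba,
        add_comm]
    have r1 := g.add1112 h h.pe ha
    have r2 : Φ (f + b) = Φ f + Φ b := g.add1121 h.swap h.swap.pe hb
    rw [← i1, g.hJ, r1, r2, wj_add_left, wj_add_right, wj_add_right, ← g.hJ, ← g.hJ, ← g.hJ, ← g.hJ]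
    have j1 : wj l m e f = 0 := by simp [wj, h.ef, h.fe]
    have j2 : wj l m a b = 0 := by simp [wj, ab, ba]
    have j3 : wj l m e b = l • b := by simp [wj, hb.a, hb.d]
    have j4 : wj l m a f = l • a := by simp [wj, ha.c, ha.b]
    rw [j1, j2, j3, j4, g.zero, zero_add, add_zero, add_comm]
  have := key (l⁻¹ • a) (l⁻¹ • b) (ha.smul _) (hb.smul _)
  simpa [smul_smul, g.hl] using this

theorem Good.add11 (g : Good l m Φ) (h : Pair e f) {a b : A} (ha : Pc e f e f a)
    (hb : Pc e f e f b) : Φ (a + b) = Φ a + Φ b := by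
  obtain ⟨t, ht⟩ := g.bij.2 (Φ a + Φ b)
  obtain ⟨h1, h2⟩ := g.HF2 h.ff ht hb.d hb.b
  rw [← ht]; congr 1; symm
  rw [← sub_eq_zero]
  refine g.fin h h1 (fun y => ?_)
  have hy := h.p12 y
  have k := g.K ht (e * y * f)
  set z := e * y * f with hz
  have j : ∀ a, Pc e f e f a → wj l m a z = l • (a * z) := by
    intro a ha
    have : z * a = 0 := hy.mul0 ha
    simp [wj, this]
  have r := g.add12 h ((ha.mul hy).smul l) ((hb.mul hy).smul l)
  rw [← j a ha, ← j b hb] at r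
  rw [← r] at k
  have k3 := g.bij.1 k
  rw [← wj_add_left, ← sub_eq_zero, ← wj_sub_left] at k3
  have i1 : z * (t - (a + b)) = 0 := by rw [hz, mul_assoc, h2, mul_zero]
  rw [wj, i1, smul_zero, add_zero] at k3
  exact smul_kill g.hl k3

theorem Good.additive (g : Good l m Φ) (h : Pair e f) (a b : A) : Φ (a + b) = Φ a + Φ b := by
  rw [g.dec h (a + b), g.dec h a, g.dec h b]
  simp only [mul_add, add_mul]
  rw [g.add11 h (h.p11 a) (h.p11 b), g.add12 h (h.p12 a) (h.p12 b),
    g.add12 h.swap (h.swap.p12 a) (h.swap.p12 b), g.add11 h.swap (h.swap.p11 a) (h.swap.p11 b)]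
  abel

end

/-! The Herstein theorem. -/

section
variable {A B : Type*} [Ring A] [Algebra ℂ A] [Ring B] [Algebra ℂ B]

theorem prime_alt (hB : ∀ x y : B, (∀ t : B, x * t * y = 0) → x = 0 ∨ y = 0) {g h : B}
    (H : ∀ X, g * X * h + h * X * g = 0) : g = 0 ∨ h = 0 := by
  apply hB
  intro X
  have key : ∀ Y, (g * X * h) * Y * (g * X * h) = 0 := by
    intro Y
    apply two_kill
    have a1 := H X
    have a2 := H Y
    have a3 := H (X * g * Y)
    have i1 : g * X * h * Y * (g * X * h) = - (g * (X * g * Y) * h * X * h) := by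
      have : g * X * h * Y * (g * X * h) + g * (X * g * Y) * h * X * h
        = g * X * (g * Y * h + h * Y * g) * X * h := by noncomm_ring
      rw [a2] at this
      rw [eq_neg_iff_add_eq_zero, this]; simp
    have i2 : g * (X * g * Y) * h = - (h * (X * g * Y) * g) := by
      rw [eq_neg_iff_add_eq_zero, a3]
    have i3 : h * X * g = - (g * X * h) := by
      rw [eq_neg_iff_add_eq_zero, add_comm, a1]
    have i4 : g * X * h * Y * (g * X * h) = - (g * X * h * Y * (g * X * h)) := by
      conv_lhs => rw [i1, i2]
      have : -(-(h * (X * g * Y) * g) * X * h) = (h * X * g) * Y * (g * X * h) := by noncomm_ring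
      rw [this, i3]; noncomm_ring
    nth_rewrite 1 [i4]
    exact neg_add_cancel _
  rcases hB _ _ key with h | h <;> exact h

theorem herstein (hB : ∀ x y : B, (∀ t : B, x * t * y = 0) → x = 0 ∨ y = 0) (φ : A → B)
    (surj : Function.Surjective φ)
    (add : ∀ a b, φ (a + b) = φ a + φ b) (sq : ∀ a, φ (a * a) = φ a * φ a) :
    (∀ a b, φ (a * b) = φ a * φ b) ∨ (∀ a b, φ (a * b) = φ b * φ a) := by
  have jor : ∀ a b, φ (a * b) + φ (b * a) = φ a * φ b + φ b * φ a := by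
    intro a b
    have h1 := sq (a + b)
    have h2 : (a + b) * (a + b) = a * a + (a * b + b * a) + b * b := by noncomm_ring
    rw [h2, add, add, add, sq, sq, add] at h1
    have h3 : (φ a + φ b) * (φ a + φ b) = φ a * φ a + (φ a * φ b + φ b * φ a) + φ b * φ b := by
      noncomm_ring
    rw [h3] at h1
    exact add_left_cancel (add_right_cancel h1)
  have aba : ∀ a b, φ (a * b * a) = φ a * φ b * φ a := by
    intro a b
    have h1 := jor a (a * b + b * a)
    have h2 := jor (a * a) b
    rw [add, jor a b, ← add] at h1
    have h3 : a * (a * b + b * a) + (a * b + b * a) * a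
      = (a * a * b + b * (a * a)) + (a * b * a + a * b * a) := by noncomm_ring
    rw [h3, add, add (a * a * b), h2, sq, add] at h1
    have h4 : φ a * (φ a * φ b + φ b * φ a) + (φ a * φ b + φ b * φ a) * φ a
      = (φ a * φ a * φ b + φ b * (φ a * φ a)) + (φ a * φ b * φ a + φ a * φ b * φ a) := by
      noncomm_ring
    rw [h4] at h1
    have h5 := add_left_cancel h1
    rw [← sub_eq_zero]
    apply two_kill
    rw [← sub_eq_zero] at h5
    rw [← h5]; abel
  have abc : ∀ a b c, φ (a * b * c) + φ (c * b * a) = φ a * φ b * φ c + φ c * φ b * φ a := by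
    intro a b c
    have h1 := aba (a + c) b
    have h2 : (a + c) * b * (a + c) = a * b * a + (a * b * c + c * b * a) + c * b * c := by
      noncomm_ring
    have h3 : (φ a + φ c) * φ b * (φ a + φ c)
      = φ a * φ b * φ a + (φ a * φ b * φ c + φ c * φ b * φ a) + φ c * φ b * φ c := by
      noncomm_ring
    rw [h2, add, add, add, aba, aba, add, h3] at h1
    exact add_left_cancel (add_right_cancel h1)
  have pt : ∀ a b, φ (a * b) - φ a * φ b = 0 ∨ φ (a * b) - φ b * φ a = 0 := by
    intro a b
    apply prime_alt hB
    intro X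
    obtain ⟨x, rfl⟩ := surj X
    have h1 := abc (a * b) x (b * a)
    have h2 : a * b * x * (b * a) = a * (b * x * b) * a := by noncomm_ring
    have h3 : b * a * x * (a * b) = b * (a * x * a) * b := by noncomm_ring
    rw [h2, h3, aba, aba, aba, aba] at h1
    have h4 : φ (b * a) = φ a * φ b + φ b * φ a - φ (a * b) := by rw [← jor]; abel
    rw [h4] at h1
    rw [← sub_eq_zero] at h1
    rw [← h1]; noncomm_ring
  have gr : ∀ a b c, φ (a * (b + c)) - φ a * φ (b + c) =
      (φ (a * b) - φ a * φ b) + (φ (a * c) - φ a * φ c) := by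
    intro a b c; rw [mul_add, add, add]; noncomm_ring
  have hr : ∀ a b c, φ (a * (b + c)) - φ (b + c) * φ a =
      (φ (a * b) - φ b * φ a) + (φ (a * c) - φ c * φ a) := by
    intro a b c; rw [mul_add, add, add]; noncomm_ring
  have gl : ∀ a b c, φ ((b + c) * a) - φ (b + c) * φ a =
      (φ (b * a) - φ b * φ a) + (φ (c * a) - φ c * φ a) := by
    intro a b c; rw [add_mul, add, add]; noncomm_ring
  have hl : ∀ a b c, φ ((b + c) * a) - φ a * φ (b + c) =
      (φ (b * a) - φ a * φ b) + (φ (c * a) - φ a * φ c) := by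
    intro a b c; rw [add_mul, add, add]; noncomm_ring
  have fa : ∀ a, (∀ b, φ (a * b) - φ a * φ b = 0) ∨ (∀ b, φ (a * b) - φ b * φ a = 0) := by
    intro a
    by_contra! hcon
    obtain ⟨⟨b, hb⟩, ⟨c, hc⟩⟩ := hcon
    have b' := (pt a b).resolve_left hb
    have c' := (pt a c).resolve_right hc
    rcases pt a (b + c) with h | h
    · rw [gr, c', add_zero] at h; exact hb h
    · rw [hr, b', zero_add] at h; exact hc h
  by_cases hA : ∀ a b, φ (a * b) - φ a * φ b = 0
  · left; intro a b; exact sub_eq_zero.1 (hA a b)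
  · right
    push Not at hA
    obtain ⟨a, b, hab⟩ := hA
    have ha : ∀ c, φ (a * c) - φ c * φ a = 0 := (fa a).resolve_left (fun h => hab (h b))
    intro c d
    by_contra hcd
    rw [← sub_eq_zero] at hcd
    have hc : ∀ b, φ (c * b) - φ c * φ b = 0 := (fa c).resolve_right (fun h => hcd (h d))
    rcases fa (a + c) with h | h
    · have := h b
      rw [gl, hc b, add_zero] at this; exact hab this
    · have := h d
      rw [hl, ha d, zero_add] at this; exact hcd this

end

theorem stmt12 {A B : Type*} [Ring A] [Algebra ℂ A] [StarRing A]
    [Ring B] [Algebra ℂ B] [StarRing B]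
    (α1 α2 α3 α4 α5 α6 : ℂ)
    (hsum : α1 + α2 + α3 + α4 + α5 + α6 ≠ 0)
    (hprime : ∀ x y : A, (∀ t : A, x * t * y = 0) → x = 0 ∨ y = 0)
    (e : A) (hestar : star e = e) (heidem : e * e = e) (he0 : e ≠ 0) (he1 : e ≠ 1)
    (Φ : A → B) (hbij : Function.Bijective Φ)
    (hBprime : ∀ x y : B, (∀ t : B, x * t * y = 0) → x = 0 ∨ y = 0)
    (hΦ : ∀ a b c : A, Φ (starTripleSum α1 α2 α3 α4 α5 α6 a b c) =
      starTripleSum α1 α2 α3 α4 α5 α6 (Φ a) (Φ b) (Φ c))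
    (hp1 : star (Φ 1) = Φ 1) (hp2 : Φ 1 * Φ 1 = Φ 1) :
    (∀ a b : A, Φ (a + b) = Φ a + Φ b) ∧
    (∀ a : A, Φ (star a) = star (Φ a)) ∧
    ((∀ a b : A, Φ (a * b) = Φ a * Φ b) ∨ (∀ a b : A, Φ (a * b) = Φ b * Φ a)) := by
  classical
  set s := α1 + α2 + α3 + α4 + α5 + α6 with hs
  have z : Φ 0 = 0 := by
    obtain ⟨b, hb⟩ := hbij.2 0
    have := hΦ 0 b 0
    simpa [starTripleSum, hb] using this
  have tA : ∀ a : A, starTripleSum α1 α2 α3 α4 α5 α6 a 1 1 = s • a := by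
    intro a; simp [starTripleSum, hs, add_smul]
  have P1 : Φ 1 = 1 := by
    have key : ∀ y : B, (1 - Φ 1) * y * (1 - Φ 1) = 0 := by
      intro y
      obtain ⟨w, rfl⟩ := hbij.2 y
      have h1 := hΦ (s⁻¹ • w) 1 1
      rw [tA, smul_smul, mul_inv_cancel₀ hsum, one_smul] at h1
      rw [h1]
      generalize Φ (s⁻¹ • w) = u
      have q1 : ∀ v : B, v * Φ 1 * (1 - Φ 1) = 0 := by
        intro v; rw [mul_sub, mul_one, mul_assoc v, hp2, sub_self]
      have q2 : ∀ v : B, (1 - Φ 1) * (Φ 1 * v) = 0 := by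
        intro v; rw [sub_mul, one_mul, ← mul_assoc, hp2, sub_self]
      simp only [starTripleSum, hp1, mul_add, add_mul, mul_smul_comm, smul_mul_assoc]
      simp only [mul_assoc] at q1 q2 ⊢
      simp [q1, q2]
    rcases hBprime _ _ key with h | h <;> exact (sub_eq_zero.1 h).symm
  have tB : ∀ a : B, starTripleSum α1 α2 α3 α4 α5 α6 a 1 1 = s • a := by
    intro a; simp [starTripleSum, hs, add_smul]
  have sm : ∀ a : A, Φ (s • a) = s • Φ a := by
    intro a; rw [← tA, hΦ, P1, tB]
  have st : ∀ a : A, Φ (star a) = star (Φ a) := by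
    intro a
    have h1 := hΦ 1 a 1
    have h2 : starTripleSum α1 α2 α3 α4 α5 α6 (1 : A) a 1 = s • star a := by
      simp [starTripleSum, hs, add_smul]
    have h3 : starTripleSum α1 α2 α3 α4 α5 α6 (1 : B) (Φ a) 1 = s • star (Φ a) := by
      simp [starTripleSum, hs, add_smul]
    rw [h2, P1, h3, sm] at h1
    exact smul_right_injective B hsum h1
  have J : ∀ a c : A, Φ (wj ((α1 + α2 + α3) / s) ((α4 + α5 + α6) / s) a c)
      = wj ((α1 + α2 + α3) / s) ((α4 + α5 + α6) / s) (Φ a) (Φ c) := by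
    intro a c
    have h1 := hΦ a 1 c
    have h2 : starTripleSum α1 α2 α3 α4 α5 α6 a 1 c
        = s • wj ((α1 + α2 + α3) / s) ((α4 + α5 + α6) / s) a c := by
      simp only [starTripleSum, wj, smul_add, smul_smul, mul_div_cancel₀ _ hsum, star_one, mul_one,
        one_mul, add_smul]
      abel
    have h3 : starTripleSum α1 α2 α3 α4 α5 α6 (Φ a) 1 (Φ c)
        = s • wj ((α1 + α2 + α3) / s) ((α4 + α5 + α6) / s) (Φ a) (Φ c) := by
      simp only [starTripleSum, wj, smul_add, smul_smul, mul_div_cancel₀ _ hsum, star_one, mul_one,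
        one_mul, add_smul]
      abel
    rw [h2, P1, h3, sm] at h1
    exact smul_right_injective B hsum h1
  have hlm : (α1 + α2 + α3) / s + (α4 + α5 + α6) / s = 1 := by
    rw [← add_div, div_eq_one_iff_eq hsum, hs]; ring
  generalize (α1 + α2 + α3) / s = l at J hlm
  generalize (α4 + α5 + α6) / s = m at J hlm
  have hpair : Pair e (1 - e) := by
    refine ⟨heidem, ?_, ?_, ?_, by abel, he0, fun h => he1 (sub_eq_zero.1 h).symm⟩ <;>
      simp [mul_sub, sub_mul, heidem]
  have hadd : ∀ a b : A, Φ (a + b) = Φ a + Φ b := by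
    by_cases hl : l = 0
    · have hm : m ≠ 0 := by rintro rfl; simp [hl] at hlm
      have g : Good m l Φ := ⟨hm, by rw [add_comm, hlm], hbij, z, fun a c => by
        have := J c a
        simp only [wj] at this ⊢
        rw [add_comm, this, add_comm], hprime⟩
      exact g.additive hpair
    · have g : Good l m Φ := ⟨hl, hlm, hbij, z, J, hprime⟩
      exact g.additive hpair
  refine ⟨hadd, st, herstein hBprime Φ hbij.2 hadd (fun a => ?_)⟩
  have := J a a
  simpa only [wj, ← add_smul, hlm, one_smul] using this
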